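/- There exists a co-c.e. tree T ⊆ 2^{<ω} whose characteristic sequence (under a fixed computable bijection between 2^{<ω} and ℕ) is weakly deep, but the Π⁰₁ class [T] is not tt-deep. -/

import Mathlib

open scoped ENNReal NNReal
open MeasureTheory Filter

namespace Depth

/-- The length-`n` initial segment of `X ∈ 2^ω`, as a finite binary string. -/
def seqTake (X : ℕ → Bool) (n : ℕ) : List Bool := (List.range n).map X

/-- `τ` is an initial segment of the sequence `X`. -/
def PrefixOfSeq (τ : List Bool) (X : ℕ → Bool) : Prop := τ = seqTake X τ.length

/-- A real-valued function is computable if its values are uniformly computable reals: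
there is a computable rational approximation function, accurate to within `2^{-k}`. -/
def ComputableNNRealFun {α : Type} [Primcodable α] (f : α → ℝ≥0) : Prop :=
  ∃ q : α × ℕ → ℚ, Computable q ∧
    ∀ x k, |(q (x, k) : ℝ) - (f x : ℝ)| ≤ (2 : ℝ) ^ (-(k : ℤ))

/-- A real-valued function is lower semicomputable if it is the pointwise supremum of a
computable sequence of rationals, nondecreasing in the stage. -/
def LowerSemicomputableFun {α : Type} [Primcodable α] (f : α → ℝ≥0) : Prop :=
  ∃ a : α × ℕ → ℚ, Computable a ∧ (∀ x s, 0 ≤ a (x, s)) ∧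
    (∀ x, Monotone fun s => a (x, s)) ∧ ∀ x, (f x : ℝ) = ⨆ s, (a (x, s) : ℝ)

/-- A discrete semimeasure on binary strings. -/
structure DiscSemimeasure where
  f : List Bool → ℝ≥0
  sum_le_one : (∑' σ : List Bool, (f σ : ℝ≥0∞)) ≤ 1

def DiscSemimeasure.Computable' (m : DiscSemimeasure) : Prop := ComputableNNRealFun m.f

def DiscSemimeasure.LowerSemicomputable' (m : DiscSemimeasure) : Prop :=
  LowerSemicomputableFun m.f

/-- `U` is a universal lower semicomputable discrete semimeasure (denoted 𝐦). -/
def UniversalDisc (U : DiscSemimeasure) : Prop :=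
  U.LowerSemicomputable' ∧
    ∀ m : DiscSemimeasure, m.LowerSemicomputable' →
      ∃ c : ℝ≥0, 0 < c ∧ ∀ σ, m.f σ ≤ c * U.f σ

/-- A continuous semimeasure on binary strings. -/
structure ContSemimeasure where
  f : List Bool → ℝ≥0
  le_one : f [] ≤ 1
  superadditive : ∀ σ : List Bool, f (σ ++ [false]) + f (σ ++ [true]) ≤ f σ

def ContSemimeasure.Computable' (P : ContSemimeasure) : Prop := ComputableNNRealFun P.f

def ContSemimeasure.LowerSemicomputable' (P : ContSemimeasure) : Prop :=
  LowerSemicomputableFun P.f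

/-- `M` is a universal lower semicomputable continuous semimeasure (denoted 𝐌). -/
def UniversalCont (M : ContSemimeasure) : Prop :=
  M.LowerSemicomputable' ∧
    ∀ P : ContSemimeasure, P.LowerSemicomputable' →
      ∃ c : ℝ≥0, 0 < c ∧ ∀ σ, P.f σ ≤ c * M.f σ

/-- A computable order: a computable, nondecreasing, unbounded function ℕ → ℕ. -/
def ComputableOrder (g : ℕ → ℕ) : Prop :=
  Computable g ∧ Monotone g ∧ ∀ k, ∃ n, k ≤ g n

/-- `X` is strongly deep (relative to the universal discrete semimeasure `U`):
for every computable discrete semimeasure `p` and every `c > 0`,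
`𝐦(X↾n) ≥ c·p(X↾n)` for all sufficiently large `n`. -/
def StronglyDeep (U : DiscSemimeasure) (X : ℕ → Bool) : Prop :=
  ∀ p : DiscSemimeasure, p.Computable' → ∀ c : ℝ≥0, 0 < c →
    ∀ᶠ n in atTop, c * p.f (seqTake X n) ≤ U.f (seqTake X n)

/-- `X` is order-deep (relative to the universal discrete semimeasure `U`). -/
def OrderDeep (U : DiscSemimeasure) (X : ℕ → Bool) : Prop :=
  ∃ g : ℕ → ℕ, ComputableOrder g ∧
    ∀ p : DiscSemimeasure, p.Computable' →
      ∃ c : ℝ≥0, 0 < c ∧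
        ∀ n, (2 : ℝ≥0) ^ g n * p.f (seqTake X n) ≤ c * U.f (seqTake X n)

/-- A computably enumerable set. -/
def CEset {α : Type} [Primcodable α] (S : Set α) : Prop :=
  ∃ f : α × ℕ → Bool, Computable f ∧ ∀ x, x ∈ S ↔ ∃ s, f (x, s) = true

/-- A Turing functional, given by a c.e. set of consistent pairs of binary strings. -/
structure TuringFunctional where
  S : Set (List Bool × List Bool)
  ce : CEset S
  consistent : ∀ ⦃σ τ σ' τ'⦄, (σ, τ) ∈ S → (σ', τ') ∈ S → σ <+: σ' → (τ <+: τ' ∨ τ' <+: τ)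

/-- `Φ^Y = X`, where the output is the infinite sequence `X`:
every output of `Φ` on a prefix of `Y` is a prefix of `X`, and the outputs on prefixes
of `Y` have unbounded lengths. -/
def Computes (Φ : TuringFunctional) (Y X : ℕ → Bool) : Prop :=
  (∀ m τ, (seqTake Y m, τ) ∈ Φ.S → PrefixOfSeq τ X) ∧
  (∀ n, ∃ m τ, (seqTake Y m, τ) ∈ Φ.S ∧ n ≤ τ.length)

/-- A tt-functional: the output `Φ^X` is infinite for every oracle `X`. -/
def TuringFunctional.Total (Φ : TuringFunctional) : Prop :=
  ∀ X : ℕ → Bool, ∀ n, ∃ m τ, (seqTake X m, τ) ∈ Φ.S ∧ n ≤ τ.length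

/-- Truth-table reducibility `X ≤_tt Y`. -/
def TTLe (X Y : ℕ → Bool) : Prop :=
  ∃ Φ : TuringFunctional, Φ.Total ∧ Computes Φ Y X

/-- Turing reducibility `X ≤_T Y`. -/
def TuringLe (X Y : ℕ → Bool) : Prop :=
  ∃ Φ : TuringFunctional, Computes Φ Y X

/-- A tree: a prefix-closed set of binary strings. -/
def IsTree (T : Set (List Bool)) : Prop := ∀ ⦃σ τ : List Bool⦄, σ ∈ T → τ <+: σ → τ ∈ T

/-- A co-c.e. set of strings. -/
def CoCE (T : Set (List Bool)) : Prop := CEset Tᶜ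

/-- `[T]`: the set of infinite paths through `T`. -/
def paths (T : Set (List Bool)) : Set (ℕ → Bool) := {X | ∀ n, seqTake X n ∈ T}

/-- A Π⁰₁ class: the set of paths through a co-c.e. tree. -/
def IsPi01 (P : Set (ℕ → Bool)) : Prop :=
  ∃ T : Set (List Bool), IsTree T ∧ CoCE T ∧ P = paths T

/-- The canonical tree of a class: the set of all initial segments of its members. -/
def canonTree (P : Set (ℕ → Bool)) : Set (List Bool) :=
  {σ | ∃ X ∈ P, σ = seqTake X σ.length}

/-- `Q(T_n)`: the sum of `Q` over the strings of length `n` in `T`. -/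
noncomputable def levelSum (Q : List Bool → ℝ≥0) (T : Set (List Bool)) (n : ℕ) : ℝ≥0∞ :=
  ∑' σ : {σ : List Bool // σ ∈ T ∧ σ.length = n}, (Q σ.1 : ℝ≥0∞)

/-- The depth condition on a class `P` (relative to the universal continuous semimeasure `M`):
there is a computable order `g` with `𝐌(T_n) ≤ 2^{-g(n)}` for all `n`, where `T` is the
canonical tree of `P`. -/
def DeepClass (M : ContSemimeasure) (P : Set (ℕ → Bool)) : Prop :=
  ∃ g : ℕ → ℕ, ComputableOrder g ∧
    ∀ n, levelSum M.f (canonTree P) n ≤ (2 : ℝ≥0∞) ^ (-(g n : ℤ))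

/-- `X` is a member of some deep Π⁰₁ class. -/
def MemberOfDeepClass (M : ContSemimeasure) (X : ℕ → Bool) : Prop :=
  ∃ P : Set (ℕ → Bool), IsPi01 P ∧ DeepClass M P ∧ X ∈ P

/-- The basic cylinder `[σ]`. -/
def cyl (σ : List Bool) : Set (ℕ → Bool) := {X | PrefixOfSeq σ X}

/-- A computable (Borel) probability measure on Cantor space:
its cylinder values are uniformly computable reals. -/
def ComputableMeasure (μ : Measure (ℕ → Bool)) : Prop :=
  IsProbabilityMeasure μ ∧
    ∃ q : List Bool × ℕ → ℚ, Computable q ∧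
      ∀ σ k, |(q (σ, k) : ℝ) - (μ (cyl σ)).toReal| ≤ (2 : ℝ) ^ (-(k : ℤ))

/-- A uniformly c.e. sequence of sets of strings. -/
def UniformlyCE (W : ℕ → Set (List Bool)) : Prop :=
  CEset {p : ℕ × List Bool | p.2 ∈ W p.1}

/-- `X` is μ-Martin-Löf random: `X` passes every μ-Martin-Löf test. -/
def MLRandom (μ : Measure (ℕ → Bool)) (X : ℕ → Bool) : Prop :=
  ∀ W : ℕ → Set (List Bool), UniformlyCE W →
    (∀ i, μ (⋃ σ ∈ W i, cyl σ) ≤ (2 : ℝ≥0∞) ^ (-(i : ℤ))) →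
    X ∉ ⋂ i, ⋃ σ ∈ W i, cyl σ

/-- `X` is weakly deep: `X` is not Martin-Löf random with respect to any computable
probability measure. -/
def WeaklyDeep (X : ℕ → Bool) : Prop :=
  ∀ μ : Measure (ℕ → Bool), ComputableMeasure μ → ¬ MLRandom μ X

/-- The tt-depth condition on a class `P`: for every computable probability measure `μ`
there is a computable order `g` with `μ(T_n) ≤ 2^{-g(n)}`, `T` the canonical tree of `P`. -/
def TTDeepClass (P : Set (ℕ → Bool)) : Prop :=
  ∀ μ : Measure (ℕ → Bool), ComputableMeasure μ →
    ∃ g : ℕ → ℕ, ComputableOrder g ∧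
      ∀ n, (∑' σ : {σ : List Bool // σ ∈ canonTree P ∧ σ.length = n}, μ (cyl σ.1))
        ≤ (2 : ℝ≥0∞) ^ (-(g n : ℤ))

/-- `X` is complex: `𝐌(X↾n) ≤ 2^{-g(n)}` for some computable order `g`. -/
def Complex (M : ContSemimeasure) (X : ℕ → Bool) : Prop :=
  ∃ g : ℕ → ℕ, ComputableOrder g ∧ ∀ n, M.f (seqTake X n) ≤ (2 : ℝ≥0) ^ (-(g n : ℤ))

/-- A fixed computable bijection ℕ → 2^{<ω} (binary representation, dropping the
leading 1 of `n+1`). -/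
def natToStr (n : ℕ) : List Bool := (Nat.bits (n + 1)).dropLast

open Classical in
/-- The characteristic sequence of a set of strings, under the fixed computable bijection. -/
noncomputable def charSeqStr (T : Set (List Bool)) (n : ℕ) : Bool :=
  decide (natToStr n ∈ T)

open Classical in
/-- The characteristic sequence of a set of natural numbers. -/
noncomputable def charSeqNat (A : Set ℕ) (n : ℕ) : Bool :=
  decide (n ∈ A)

/-- `lam` is the uniform (fair-coin) Borel probability measure on Cantor space. -/
def IsFairCoin (lam : Measure (ℕ → Bool)) : Prop :=
  IsProbabilityMeasure lam ∧
    ∀ σ : List Bool, lam (cyl σ) = (2 : ℝ≥0∞) ^ (-(σ.length : ℤ))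

/-- The join `Y ⊕ Z`. -/
def join (Y Z : ℕ → Bool) (n : ℕ) : Bool :=
  if n % 2 = 0 then Y (n / 2) else Z (n / 2)

/-- The standard enumeration of the partial computable functions. -/
noncomputable def phi (e : ℕ) : ℕ →. ℕ := (Denumerable.ofNat Nat.Partrec.Code e).eval

/-- The halting set ∅'. -/
def haltingSet : Set ℕ := {e | (phi e e).Dom}

/-- `C` is an index set. -/
def IsIndexSet (C : Set ℕ) : Prop :=
  ∀ e e' : ℕ, phi e = phi e' → (e ∈ C ↔ e' ∈ C)

/-!
The set `A = {⟨⟨e, i⟩, j⟩ : program e halts on ⟨⟨e, i⟩, j⟩}` is c.e., and the tree obtained from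
`2^{<ω}` by removing the cones above `0ⁿ1`, `n ∈ A`, codes the complement of `A` while keeping the
computable path `0^ω`. The Dirac measure at `0^ω` is computable and refutes tt-depth.

For weak depth, fix a computable `μ`. For each `p` the events that `v` is least with `⟨p, v⟩ ∉ A`,
read as conditions on the characteristic sequence of the tree, are pairwise disjoint and clopen,
so their `μ`-measures tend to `0` as `v → ∞`, and a computable `f` picks `v = f p` with measure at
most `2⁻ᵖ`. Some program `e` halts on `⟨p, j⟩` exactly when `j < f p`, so the event chosen for `p
= ⟨e, i⟩` is hit for every `i`. As `i ≤ ⟨e, i⟩`, these events form a Martin-Löf test capturing the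
characteristic sequence.
-/

open Encodable
open Nat.Partrec (Code)

section Computability

variable {α : Type*} [Primcodable α]

theorem primrec_pow : Primrec₂ fun a b : ℕ => a ^ b :=
  Primrec₂.unpaired'.1 Nat.Primrec.pow

theorem primrec_testBit : Primrec₂ Nat.testBit := by
  have hquot : Primrec fun x : ℕ × ℕ => x.1 / 2 ^ x.2 % 2 :=
    Primrec.nat_mod.comp
      (Primrec.nat_div.comp Primrec.fst (primrec_pow.comp (Primrec.const 2) Primrec.snd))
      (Primrec.const 2)
  exact (Primrec.eq.comp hquot (Primrec.const 1)).decide.of_eq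
    fun _ => Nat.testBit_eq_decide_div_mod_eq.symm

theorem primrecRel_forall_lt {R : ℕ → α → Prop} (hR : PrimrecRel R) :
    PrimrecRel fun n a => ∀ m < n, R m a :=
  (hR.forall_mem_list.comp (Primrec.list_range.comp Primrec.fst) Primrec.snd).of_eq
    fun _ => by simp only [List.mem_range]

theorem primrecRel_dvd : PrimrecRel fun a b : ℕ => a ∣ b :=
  (Primrec.eq.comp (Primrec.nat_mod.comp Primrec.snd Primrec.fst) (Primrec.const 0)).of_eq
    fun _ => (Nat.dvd_iff_mod_eq_zero).symm

theorem coprime_iff_forall_lt (m n : ℕ) :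
    m.Coprime n ↔ ∀ d < m + n + 1, d ∣ m ∧ d ∣ n → d = 1 := by
  refine ⟨fun h d _ hd => Nat.eq_one_of_dvd_coprimes h hd.1 hd.2, fun h => ?_⟩
  refine h (m.gcd n) ?_ ⟨Nat.gcd_dvd_left m n, Nat.gcd_dvd_right m n⟩
  rcases Nat.eq_zero_or_pos m with rfl | hm
  · simp
  · have := Nat.gcd_le_left n hm
    omega

theorem primrecRel_coprime : PrimrecRel Nat.Coprime := by
  have hdvd : PrimrecRel fun (d : ℕ) (x : ℕ × ℕ) => d ∣ x.1 ∧ d ∣ x.2 → d = 1 :=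
    (((primrecRel_dvd.comp Primrec.fst (Primrec.fst.comp Primrec.snd)).and
      (primrecRel_dvd.comp Primrec.fst (Primrec.snd.comp Primrec.snd))).not.or
      (Primrec.eq.comp Primrec.fst (Primrec.const 1))).of_eq fun _ => imp_iff_not_or.symm
  have hforall : PrimrecPred fun x : ℕ × ℕ => ∀ d < x.1 + x.2 + 1, d ∣ x.1 ∧ d ∣ x.2 → d = 1 :=
    (primrecRel_forall_lt hdvd).comp
      (Primrec.succ.comp (Primrec.nat_add.comp Primrec.fst Primrec.snd)) Primrec.id
  exact hforall.of_eq fun x => (coprime_iff_forall_lt x.1 x.2).symm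

theorem computable_sum_range {f : α → ℕ → ℕ} (hf : Computable₂ f) {n : α → ℕ}
    (hn : Computable n) : Computable fun a => ∑ m ∈ Finset.range (n a), f a m := by
  have hstep : Computable₂ fun a (x : ℕ × ℕ) => x.2 + f a x.1 :=
    Primrec.nat_add.to_comp.comp (Computable.snd.comp Computable.snd)
      (hf.comp Computable.fst (Computable.fst.comp Computable.snd))
  refine (Computable.nat_rec hn (Computable.const 0) hstep).of_eq fun a => ?_
  induction n a with
  | zero => rfl
  | succ k ih => rw [Finset.sum_range_succ, ← ih]

theorem computable_seqTake {X : α → ℕ → Bool} (hX : Computable₂ X) {n : α → ℕ}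
    (hn : Computable n) : Computable fun a => seqTake (X a) (n a) := by
  have hstep : Computable₂ fun a (x : ℕ × List Bool) => x.2 ++ [X a x.1] :=
    Computable.list_concat.comp (Computable.snd.comp Computable.snd)
      (hX.comp Computable.fst (Computable.fst.comp Computable.snd))
  refine (Computable.nat_rec hn (Computable.const []) hstep).of_eq fun a => ?_
  induction n a with
  | zero => rfl
  | succ k ih => simp only [ih, seqTake, List.range_succ, List.map_append, List.map_singleton]

theorem computable_seqTake_testBit {m n : α → ℕ} (hm : Computable m) (hn : Computable n) :
    Computable fun a => seqTake (m a).testBit (n a) :=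
  computable_seqTake (X := fun a => (m a).testBit)
    (primrec_testBit.to_comp.comp (hm.comp Computable.fst) Computable.snd) hn

theorem computable_nth {p : ℕ → Prop} (hp : ComputablePred p) (hinf : (Set.ofPred p).Infinite) :
    Computable (Nat.nth p) := by
  classical
  have hcount : Computable (Nat.count p) := by
    refine (computable_sum_range (f := fun _ m => bif decide (p m) then 1 else 0)
      (Computable.cond (hp.decide.comp Computable.snd) (Computable.const 1) (Computable.const 0))
      Computable.id).of_eq fun n => ?_
    simp [Nat.count_eq_card_filter_range, Bool.cond_eq_ite]
  have hex (n : ℕ) : ∃ m, p m ∧ Nat.count p m = n :=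
    ⟨Nat.nth p n, Nat.nth_mem_of_infinite hinf n, Nat.count_nth_of_infinite hinf n⟩
  have hsearch : ComputablePred fun x : ℕ × ℕ => p x.2 ∧ Nat.count p x.2 = x.1 :=
    ((Primrec.and.to_comp.comp (hp.decide.comp Computable.snd)
      (Primrec.eq.decide.to_comp.comp (hcount.comp Computable.snd) Computable.fst)).of_eq
      fun x => by simp).computablePred
  refine (Computable.find hsearch hex).of_eq fun n => ?_
  obtain ⟨hpm, hm⟩ := Nat.find_spec (hex n)
  rw [← Nat.nth_count hpm, hm]

end Computability

section Rational

-- Mathlib takes the `Primcodable` structure of `ℚ` from `Denumerable.ofEncodableOfInfinite`: the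
-- code of `x` is the rank of its (numerator, denominator) encoding among all values of that
-- encoding. Enumerating these values in increasing order recovers the latter.
theorem nth_range_encode {α : Type*} [Encodable α] [Infinite α] (x : α) :
    Nat.nth (· ∈ Set.range (encode : α → ℕ))
      ((Denumerable.ofEncodableOfInfinite α).toEncodable.encode x) = encode x := by
  let _ := @decidableRangeEncode α _
  have hinf : (Set.range (encode : α → ℕ)).Infinite :=
    Set.infinite_range_of_injective encode_injective
  have := hinf.to_subtype
  let _ := Nat.Subtype.denumerable (Set.range (encode : α → ℕ))
  have hnth (n : ℕ) : Nat.nth (· ∈ Set.range (encode : α → ℕ)) n =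
      Nat.Subtype.ofNat (Set.range (encode : α → ℕ)) n :=
    (Nat.nth_apply_eq_orderIsoOfNat hinf n).trans <| congrArg Subtype.val <|
      Nat.Subtype.orderIsoOfNat_apply (s := Set.range (encode : α → ℕ))
  exact (hnth _).trans (congrArg Subtype.val
    (Denumerable.ofNat_encode (⟨encode x, x, rfl⟩ : Set.range (encode : α → ℕ))))

theorem encode_rat_eq_pair (x : ℚ) :
    Rat.instEncodable.encode x = Nat.pair (encode x.num) x.den := rfl

theorem mem_range_encode_rat (n : ℕ) : n ∈ Set.range Rat.instEncodable.encode ↔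
    n.unpair.2 ≠ 0 ∧ (Denumerable.ofNat ℤ n.unpair.1).natAbs.Coprime n.unpair.2 := by
  constructor
  · rintro ⟨x, rfl⟩
    rw [encode_rat_eq_pair, Nat.unpair_pair]
    exact ⟨x.den_nz, by simpa only [Denumerable.ofNat_encode] using x.reduced⟩
  · rintro ⟨hpos, hcop⟩
    exact ⟨⟨_, _, hpos, hcop⟩, by
      rw [encode_rat_eq_pair, Denumerable.encode_ofNat, Nat.pair_unpair]⟩

-- The code of an integer is `2 * a` for `a ≥ 0` and `2 * a + 1` for `-(a + 1)`.
theorem primrec_natAbs : Primrec Int.natAbs :=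
  (Primrec.nat_div.comp (Primrec.succ.comp Primrec.encode) (Primrec.const 2)).of_eq fun z => by
    rcases z with a | a
    · change (2 * a + 1) / 2 = a
      omega
    · change (2 * a + 1 + 1) / 2 = a + 1
      omega

theorem primrec_toNat : Primrec Int.toNat :=
  (Primrec.ite (Primrec.eq.comp (Primrec.nat_mod.comp Primrec.encode (Primrec.const 2))
    (Primrec.const 0)) (Primrec.nat_div.comp Primrec.encode (Primrec.const 2))
    (Primrec.const 0)).of_eq fun z => by
    rcases z with a | a
    · change (if 2 * a % 2 = 0 then 2 * a / 2 else 0) = a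
      split_ifs <;> omega
    · change (if (2 * a + 1) % 2 = 0 then (2 * a + 1) / 2 else 0) = 0
      split_ifs <;> omega

theorem computable_encode_rat : Computable Rat.instEncodable.encode := by
  have hrange : PrimrecPred (· ∈ Set.range Rat.instEncodable.encode) :=
    ((Primrec.eq.comp (Primrec.snd.comp Primrec.unpair) (Primrec.const 0)).not.and
      (primrecRel_coprime.comp (primrec_natAbs.comp ((Primrec.ofNat ℤ).comp
        (Primrec.fst.comp Primrec.unpair))) (Primrec.snd.comp Primrec.unpair))).of_eq
      fun n => (mem_range_encode_rat n).symm
  exact ((computable_nth hrange.computablePred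
    (Set.infinite_range_of_injective (@encode_injective ℚ Rat.instEncodable))).comp
    (Computable.encode (α := ℚ))).of_eq nth_range_encode

theorem computable_rat_num : Computable Rat.num :=
  Computable.encode_iff.1 <|
    (Computable.fst.comp (Computable.unpair.comp computable_encode_rat)).of_eq fun x => by
      rw [encode_rat_eq_pair, Nat.unpair_pair]

theorem computable_rat_den : Computable Rat.den :=
  (Computable.snd.comp (Computable.unpair.comp computable_encode_rat)).of_eq fun x => by
    rw [encode_rat_eq_pair, Nat.unpair_pair]

theorem natFloor_rat_mul_natCast (x : ℚ) (n : ℕ) : ⌊x * n⌋₊ = x.num.toNat * n / x.den := by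
  have hx : (x.num.toNat : ℚ) = max x.num 0 := by exact_mod_cast Int.toNat_eq_max x.num
  rw [← Nat.floor_div_eq_div (K := ℚ)]
  push_cast
  rcases le_total 0 x with h | h
  · rw [hx, max_eq_left (by exact_mod_cast Rat.num_nonneg.2 h), mul_div_right_comm,
      Rat.num_div_den]
  · rw [hx, max_eq_right (by exact_mod_cast Rat.num_nonpos.2 h), Int.cast_zero, zero_mul,
      zero_div, Nat.floor_zero]
    exact Nat.floor_of_nonpos (mul_nonpos_of_nonpos_of_nonneg h n.cast_nonneg)

theorem computable_natFloor_mul : Computable₂ fun (x : ℚ) (n : ℕ) => ⌊x * n⌋₊ :=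
  (Primrec.nat_div.to_comp.comp
    (Primrec.nat_mul.to_comp.comp
      (primrec_toNat.to_comp.comp (computable_rat_num.comp Computable.fst)) Computable.snd)
    (computable_rat_den.comp Computable.fst)).of_eq fun x =>
      (natFloor_rat_mul_natCast x.1 x.2).symm

end Rational

section Approximation

theorem abs_natFloor_sub_le {x r : ℝ} (hr : 0 ≤ r) : |(⌊x⌋₊ : ℝ) - r| ≤ |x - r| + 1 := by
  have hlt := Nat.lt_floor_add_one x
  rcases le_total 0 x with hx | hx
  · have hle := Nat.floor_le hx
    have hfloor : |(⌊x⌋₊ : ℝ) - x| ≤ 1 := abs_sub_le_iff.2 ⟨by linarith, by linarith⟩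
    linarith [abs_sub_le (⌊x⌋₊ : ℝ) x r]
  · rw [Nat.floor_of_nonpos hx, Nat.cast_zero]
    linarith [abs_of_nonpos (sub_nonpos.2 hr), abs_of_nonpos (sub_nonpos.2 (hx.trans hr))]

theorem abs_natDiv_sub_le {m d : ℕ} {r : ℝ} (hd : 0 < d) (h : |(m : ℝ) - d * r| ≤ d) :
    |((m / d : ℕ) : ℝ) - r| ≤ 2 := by
  have hd' : (0 : ℝ) < d := by exact_mod_cast hd
  have hquot : |(m : ℝ) / d - r| ≤ 1 := by
    rwa [div_sub' hd'.ne', abs_div, abs_of_pos hd', div_le_one hd']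
  have hfloor : |((m / d : ℕ) : ℝ) - m / d| ≤ 1 := by
    rw [← Nat.floor_div_eq_div (K := ℝ)]
    have hle := Nat.floor_le (a := (m : ℝ) / d) (by positivity)
    have hlt := Nat.lt_floor_add_one ((m : ℝ) / d)
    exact abs_sub_le_iff.2 ⟨by linarith, by linarith⟩
  linarith [abs_sub_le ((m / d : ℕ) : ℝ) (m / d) r]

/-- A nonnegative real-valued function is dyadically approximable if it is uniformly computable,
where the approximation of `f x` to within about `2⁻ᵏ` is given by the natural number `a (x, k)`
standing for `a (x, k) / 2ᵏ`. Natural number numerators replace the rationals of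
`ComputableMeasure` because the arithmetic of `ℚ` is not available in the computability library;
any positive constant could take the place of the error bound `2`. -/
def DyadicallyApproximable {α : Type*} [Primcodable α] (f : α → ℝ) : Prop :=
  ∃ a : α × ℕ → ℕ, Computable a ∧ ∀ x k, |(a (x, k) : ℝ) - 2 ^ k * f x| ≤ 2

theorem dyadicallyApproximable_cyl {μ : Measure (ℕ → Bool)} (hμ : ComputableMeasure μ) :
    DyadicallyApproximable fun σ => μ.real (cyl σ) := by
  obtain ⟨-, q, hq, hqμ⟩ := hμ
  refine ⟨fun x => ⌊q x * (2 ^ x.2 : ℕ)⌋₊,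
    computable_natFloor_mul.comp hq (primrec_pow.to_comp.comp (Computable.const 2) Computable.snd),
    fun σ k => ?_⟩
  have hcast : ⌊q (σ, k) * (2 ^ k : ℕ)⌋₊ = ⌊(q (σ, k) : ℝ) * 2 ^ k⌋₊ := by
    rw [← Int.floor_toNat, ← Int.floor_toNat, ← Rat.floor_cast (α := ℝ)]
    push_cast
    rfl
  have hscaled : |(q (σ, k) : ℝ) * 2 ^ k - 2 ^ k * μ.real (cyl σ)| ≤ 1 := by
    rw [mul_comm, ← mul_sub, abs_mul, abs_of_pos (by positivity)]
    calc (2 : ℝ) ^ k * |(q (σ, k) : ℝ) - μ.real (cyl σ)| ≤ 2 ^ k * 2 ^ (-(k : ℤ)) := by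
          gcongr
          exact hqμ σ k
      _ = 1 := by rw [zpow_neg, zpow_natCast, mul_inv_cancel₀ (by positivity)]
  change |(⌊q (σ, k) * (2 ^ k : ℕ)⌋₊ : ℝ) - 2 ^ k * μ.real (cyl σ)| ≤ 2
  rw [hcast]
  linarith [abs_natFloor_sub_le (x := (q (σ, k) : ℝ) * 2 ^ k) (r := 2 ^ k * μ.real (cyl σ))
    (by positivity)]

namespace DyadicallyApproximable

variable {α β : Type*} [Primcodable α] [Primcodable β] {f : α → ℝ}

theorem comp (hf : DyadicallyApproximable f) {g : β → α} (hg : Computable g) :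
    DyadicallyApproximable fun b => f (g b) := by
  obtain ⟨a, ha, haf⟩ := hf
  exact ⟨fun x => a (g x.1, x.2), ha.comp ((hg.comp Computable.fst).pair Computable.snd),
    fun b => haf (g b)⟩

open Classical in
theorem ite_zero (hf : DyadicallyApproximable f) {p : α → Prop} (hp : ComputablePred p) :
    DyadicallyApproximable fun x => if p x then f x else 0 := by
  obtain ⟨a, ha, haf⟩ := hf
  refine ⟨fun x => bif decide (p x.1) then a x else 0,
    Computable.cond (hp.decide.comp Computable.fst) ha (Computable.const 0), fun x k => ?_⟩
  by_cases hx : p x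
  · simpa [hx] using haf x k
  · simp [hx]

theorem sum_range_two_pow {f : α × ℕ → ℝ} (hf : DyadicallyApproximable f) {L : α → ℕ}
    (hL : Computable L) :
    DyadicallyApproximable fun x => ∑ m ∈ Finset.range (2 ^ L x), f (x, m) := by
  obtain ⟨a, ha, haf⟩ := hf
  have hLfst : Computable fun x : α × ℕ => L x.1 := hL.comp Computable.fst
  have hterm : Computable₂ fun (x : α × ℕ) (m : ℕ) => a ((x.1, m), x.2 + (L x.1 + 1)) :=
    ha.comp (((Computable.fst.comp Computable.fst).pair Computable.snd).pair
      (Primrec.nat_add.to_comp.comp (Computable.snd.comp Computable.fst)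
        (Computable.succ.comp (hLfst.comp Computable.fst))))
  refine ⟨fun x => (∑ m ∈ Finset.range (2 ^ L x.1), a ((x.1, m), x.2 + (L x.1 + 1))) /
      2 ^ (L x.1 + 1),
    Primrec.nat_div.to_comp.comp
      (computable_sum_range hterm (primrec_pow.to_comp.comp (Computable.const 2) hLfst))
      (primrec_pow.to_comp.comp (Computable.const 2) (Computable.succ.comp hLfst)),
    fun x k => abs_natDiv_sub_le (by positivity) ?_⟩
  -- The `2 ^ L` errors of size at most `2` are compensated by `L + 1` extra bits of precision.
  calc |((∑ m ∈ Finset.range (2 ^ L x), a ((x, m), k + (L x + 1)) : ℕ) : ℝ) -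
        (2 ^ (L x + 1) : ℕ) * (2 ^ k * ∑ m ∈ Finset.range (2 ^ L x), f (x, m))|
      = |∑ m ∈ Finset.range (2 ^ L x),
          ((a ((x, m), k + (L x + 1)) : ℝ) - 2 ^ (k + (L x + 1)) * f (x, m))| := by
        rw [Finset.sum_sub_distrib, ← Finset.mul_sum, pow_add]
        push_cast
        ring_nf
    _ ≤ ∑ _m ∈ Finset.range (2 ^ L x), (2 : ℝ) :=
        (Finset.abs_sum_le_sum_abs _ _).trans (Finset.sum_le_sum fun m _ => haf (x, m) _)
    _ = (2 ^ (L x + 1) : ℕ) := by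
        rw [Finset.sum_const, Finset.card_range, nsmul_eq_mul, pow_succ]
        push_cast
        rfl

theorem exists_computable_le_of_tendsto_zero {f : α × ℕ → ℝ} (hf : DyadicallyApproximable f)
    (hlim : ∀ x, Tendsto (fun n => f (x, n)) atTop (nhds 0)) :
    ∃ g : α × ℕ → ℕ, Computable g ∧ ∀ x i, f (x, g (x, i)) ≤ (2 ^ i)⁻¹ := by
  obtain ⟨a, ha, haf⟩ := hf
  have hex (x : α × ℕ) : ∃ n, a ((x.1, n), x.2 + 3) ≤ 3 := by
    have hsmall : ∀ᶠ n in atTop, f (x.1, n) < (2 ^ (x.2 + 3))⁻¹ :=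
      (hlim x.1).eventually_lt_const (by positivity)
    obtain ⟨n, hn⟩ := hsmall.exists
    have hone : 2 ^ (x.2 + 3) * f (x.1, n) ≤ 1 :=
      (mul_le_mul_of_nonneg_left hn.le (by positivity)).trans_eq
        (mul_inv_cancel₀ (by positivity))
    have hreal : (a ((x.1, n), x.2 + 3) : ℝ) ≤ 3 := by
      linarith [(abs_sub_le_iff.1 (haf (x.1, n) (x.2 + 3))).1]
    exact ⟨n, by exact_mod_cast hreal⟩
  have hsearch : ComputablePred fun y : (α × ℕ) × ℕ => a ((y.1.1, y.2), y.1.2 + 3) ≤ 3 :=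
    (Primrec.nat_le.decide.to_comp.comp (ha.comp
      (((Computable.fst.comp Computable.fst).pair Computable.snd).pair
        (Primrec.nat_add.to_comp.comp (Computable.snd.comp Computable.fst)
          (Computable.const 3)))) (Computable.const 3)).computablePred
  refine ⟨fun x => Nat.find (hex x), Computable.find hsearch hex, fun x i => ?_⟩
  have hfind : (a ((x, Nat.find (hex (x, i))), i + 3) : ℝ) ≤ 3 := by
    exact_mod_cast Nat.find_spec (hex (x, i))
  have hfive := (abs_sub_le_iff.1 (haf (x, Nat.find (hex (x, i))) (i + 3))).2
  rw [pow_add] at hfive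
  change f (x, Nat.find (hex (x, i))) ≤ (2 ^ i)⁻¹
  rw [← one_div, le_div_iff₀ (by positivity)]
  linarith

end DyadicallyApproximable

end Approximation

section Clopen

theorem mem_cyl_seqTake {X Y : ℕ → Bool} {n : ℕ} :
    X ∈ cyl (seqTake Y n) ↔ ∀ j < n, X j = Y j := by
  simp [cyl, PrefixOfSeq, seqTake, List.map_inj_left, eq_comm]

theorem measurableSet_cyl_seqTake (Y : ℕ → Bool) (n : ℕ) :
    MeasurableSet (cyl (seqTake Y n)) := by
  have : cyl (seqTake Y n) = ⋂ j < n, {X | X j = Y j} := by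
    ext X
    simp [mem_cyl_seqTake]
  rw [this]
  exact MeasurableSet.iInter fun j => MeasurableSet.iInter fun _ =>
    measurableSet_eq_fun (measurable_pi_apply j) measurable_const

theorem exists_testBit_eq (X : ℕ → Bool) (n : ℕ) :
    ∃ m < 2 ^ n, ∀ j < n, m.testBit j = X j :=
  ⟨Nat.ofBits fun j : Fin n => X j, Nat.ofBits_lt_two_pow _, fun j hj =>
    Nat.testBit_ofBits_lt _ j hj⟩

theorem disjoint_cyl_testBit {n k m : ℕ} (hk : k < 2 ^ n) (hm : m < 2 ^ n) (hne : k ≠ m) :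
    Disjoint (cyl (seqTake k.testBit n)) (cyl (seqTake m.testBit n)) := by
  refine Set.disjoint_left.2 fun X hXk hXm => hne (Nat.eq_of_testBit_eq fun j => ?_)
  rcases lt_or_ge j n with hj | hj
  · rw [← mem_cyl_seqTake.1 hXk j hj, mem_cyl_seqTake.1 hXm j hj]
  · rw [Nat.testBit_lt_two_pow (hk.trans_le (Nat.pow_le_pow_right two_pos hj)),
      Nat.testBit_lt_two_pow (hm.trans_le (Nat.pow_le_pow_right two_pos hj))]

open Classical in
theorem eq_biUnion_cyl_of_dependsOn {U : Set (ℕ → Bool)} {n : ℕ}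
    (hU : DependsOn (· ∈ U) (Set.Iio n)) :
    U = ⋃ m ∈ (Finset.range (2 ^ n)).filter (·.testBit ∈ U), cyl (seqTake m.testBit n) := by
  ext X
  simp only [Set.mem_iUnion, Finset.mem_filter, Finset.mem_range, exists_prop, mem_cyl_seqTake]
  constructor
  · intro hX
    obtain ⟨m, hm, hmX⟩ := exists_testBit_eq X n
    exact ⟨m, ⟨hm, (iff_of_eq (hU hmX)).2 hX⟩, fun j hj => (hmX j hj).symm⟩
  · rintro ⟨m, ⟨-, hm⟩, hXm⟩
    exact (iff_of_eq (hU hXm)).2 hm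

open Classical in
theorem measureReal_eq_sum_cyl_of_dependsOn (μ : Measure (ℕ → Bool)) [IsFiniteMeasure μ]
    {U : Set (ℕ → Bool)} {n : ℕ} (hU : DependsOn (· ∈ U) (Set.Iio n)) :
    μ.real U = ∑ m ∈ Finset.range (2 ^ n),
      if m.testBit ∈ U then μ.real (cyl (seqTake m.testBit n)) else 0 := by
  conv_lhs => rw [eq_biUnion_cyl_of_dependsOn hU]
  rw [← Finset.sum_filter, measureReal_biUnion_finset]
  · intro k hk m hm hne
    exact disjoint_cyl_testBit (Finset.mem_range.1 (Finset.mem_filter.1 hk).1)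
      (Finset.mem_range.1 (Finset.mem_filter.1 hm).1) hne
  · exact fun m _ => measurableSet_cyl_seqTake m.testBit n

/-- A uniformly computable family of clopen sets: membership of `X` in `U a` is determined by
the first `L a` bits of `X`, for a computable `L`, and decidable from them. The finite string is
presented by the natural number `m` whose binary digits, least significant first, are its
bits; padding with zeros turns `m` into the sequence `m.testBit`. -/
structure UniformlyClopen {α : Type*} [Primcodable α] (U : α → Set (ℕ → Bool)) : Prop where
  exists_dependsOn : ∃ L : α → ℕ, Computable L ∧ ∀ a, DependsOn (· ∈ U a) (Set.Iio (L a))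
  computablePred : ComputablePred fun x : α × ℕ => x.2.testBit ∈ U x.1

namespace UniformlyClopen

variable {α β : Type*} [Primcodable α] [Primcodable β] {U : α → Set (ℕ → Bool)}

theorem comp (hU : UniformlyClopen U) {f : β → α} (hf : Computable f) :
    UniformlyClopen fun b => U (f b) := by
  classical
  obtain ⟨⟨L, hL, hdep⟩, hmem⟩ := hU
  exact ⟨⟨fun b => L (f b), hL.comp hf, fun b => hdep (f b)⟩,
    (hmem.decide.comp ((hf.comp Computable.fst).pair Computable.snd)).computablePred⟩

theorem dyadicallyApproximable_measureReal (hU : UniformlyClopen U) {μ : Measure (ℕ → Bool)}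
    (hμ : ComputableMeasure μ) : DyadicallyApproximable fun a => μ.real (U a) := by
  classical
  have := hμ.1
  obtain ⟨⟨L, hL, hdep⟩, hmem⟩ := hU
  have hstring : Computable fun x : α × ℕ => seqTake x.2.testBit (L x.1) :=
    computable_seqTake_testBit Computable.snd (hL.comp Computable.fst)
  simp only [fun a => measureReal_eq_sum_cyl_of_dependsOn μ (hdep a)]
  exact (((dyadicallyApproximable_cyl hμ).comp hstring).ite_zero hmem).sum_range_two_pow hL

theorem not_mlRandom {U : ℕ → Set (ℕ → Bool)} (hU : UniformlyClopen U)
    {μ : Measure (ℕ → Bool)} (hμU : ∀ i, μ (U i) ≤ (2 : ℝ≥0∞) ^ (-(i : ℤ)))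
    {X : ℕ → Bool} (hX : ∀ i, X ∈ U i) : ¬ MLRandom μ X := by
  classical
  obtain ⟨⟨L, hL, hdep⟩, hmem⟩ := hU
  let D (i : ℕ) : Finset ℕ := (Finset.range (2 ^ L i)).filter (·.testBit ∈ U i)
  let W (i : ℕ) : Set (List Bool) := (fun m : ℕ => seqTake m.testBit (L i)) '' D i
  have hW (i : ℕ) : ⋃ σ ∈ W i, cyl σ = U i := by
    rw [Set.biUnion_image]
    exact (eq_biUnion_cyl_of_dependsOn (hdep i)).symm
  have hstring : Computable fun x : (ℕ × List Bool) × ℕ => seqTake x.2.testBit (L x.1.1) :=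
    computable_seqTake_testBit Computable.snd (hL.comp (Computable.fst.comp Computable.fst))
  have hbound : Computable fun x : (ℕ × List Bool) × ℕ => decide (x.2 < 2 ^ L x.1.1) :=
    Primrec.nat_lt.decide.to_comp.comp Computable.snd
      (primrec_pow.to_comp.comp (Computable.const 2)
        (hL.comp (Computable.fst.comp Computable.fst)))
  have hWce : UniformlyCE W := by
    refine ⟨fun x => (decide (x.2 < 2 ^ L x.1.1) && decide (x.2.testBit ∈ U x.1.1)) &&
      decide (seqTake x.2.testBit (L x.1.1) = x.1.2), ?_, fun x => ?_⟩
    · exact (Primrec.and.to_comp.comp (Primrec.and.to_comp.comp hbound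
        (hmem.decide.comp ((Computable.fst.comp Computable.fst).pair Computable.snd)))
        (Primrec.eq.decide.to_comp.comp hstring (Computable.snd.comp Computable.fst)) :)
    · simp only [W, D, Set.mem_ofPred_eq, Set.mem_image, Finset.mem_coe, Finset.mem_filter,
        Finset.mem_range, Bool.and_eq_true, decide_eq_true_eq]
  intro hrandom
  refine hrandom W hWce (fun i => by simpa only [hW] using hμU i) (Set.mem_iInter.2 fun i => ?_)
  rw [hW]
  exact hX i

end UniformlyClopen

end Clopen

section FirstTrue

/-- The event that `v` is the least index at which `X (r v)` is true: `v` is the first hit of the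
sequence of positions `r`. -/
def firstTrue (r : ℕ → ℕ) : ℕ → Set (ℕ → Bool) :=
  disjointed fun v => {X | X (r v) = true}

theorem mem_firstTrue {r : ℕ → ℕ} {v : ℕ} {X : ℕ → Bool} :
    X ∈ firstTrue r v ↔ X (r v) = true ∧ ∀ j < v, X (r j) = false := by
  simp [firstTrue, disjointed_eq_inter_compl]

theorem measurableSet_firstTrue (r : ℕ → ℕ) (v : ℕ) : MeasurableSet (firstTrue r v) :=
  MeasurableSet.disjointed
    (fun v => measurableSet_eq_fun (measurable_pi_apply (r v)) measurable_const) v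

theorem tendsto_measureReal_firstTrue (μ : Measure (ℕ → Bool)) [IsFiniteMeasure μ]
    (r : ℕ → ℕ) : Tendsto (fun v => μ.real (firstTrue r v)) atTop (nhds 0) := by
  have hsum : ∑' v, μ (firstTrue r v) ≠ ∞ :=
    ne_of_eq_of_ne (measure_iUnion (disjoint_disjointed _) (measurableSet_firstTrue r)).symm
      (measure_ne_top μ _)
  exact (ENNReal.tendsto_toReal ENNReal.zero_ne_top).comp
    (ENNReal.tendsto_atTop_zero_of_tsum_ne_top hsum)

theorem uniformlyClopen_firstTrue {r : ℕ → ℕ → ℕ} (hr : Primrec₂ r)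
    (hmono : ∀ p, Monotone (r p)) :
    UniformlyClopen fun x : ℕ × ℕ => firstTrue (r x.1) x.2 where
  exists_dependsOn := by
    refine ⟨fun x => r x.1 x.2 + 1, (Primrec.succ.comp hr).to_comp, fun x X Y hXY => ?_⟩
    have heq (j : ℕ) (hj : j ≤ x.2) : X (r x.1 j) = Y (r x.1 j) :=
      hXY _ (Nat.lt_succ_of_le (hmono x.1 hj))
    simp only [mem_firstTrue, heq x.2 le_rfl]
    exact propext (and_congr_right' (forall₂_congr fun j hj => by rw [heq j hj.le]))
  computablePred := by
    have hfalse : PrimrecRel fun (j : ℕ) (y : ℕ × ℕ) => y.2.testBit (r y.1 j) = false :=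
      Primrec.eq.comp (primrec_testBit.comp (Primrec.snd.comp Primrec.snd)
        (hr.comp (Primrec.fst.comp Primrec.snd) Primrec.fst)) (Primrec.const false)
    have htrue : PrimrecPred fun y : (ℕ × ℕ) × ℕ => y.2.testBit (r y.1.1 y.1.2) = true :=
      Primrec.eq.comp (primrec_testBit.comp Primrec.snd
        (hr.comp (Primrec.fst.comp Primrec.fst) (Primrec.snd.comp Primrec.fst)))
        (Primrec.const true)
    have hforall : PrimrecPred fun y : (ℕ × ℕ) × ℕ =>
        ∀ j < y.1.2, y.2.testBit (r y.1.1 j) = false :=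
      (primrecRel_forall_lt hfalse).comp (Primrec.snd.comp Primrec.fst)
        ((Primrec.fst.comp Primrec.fst).pair Primrec.snd)
    exact ((htrue.and hforall).of_eq fun y => mem_firstTrue.symm).computablePred

theorem weaklyDeep_of_firstTrue_diagonal {r : ℕ → ℕ → ℕ} (hr : Primrec₂ r)
    (hmono : ∀ p, Monotone (r p)) {X : ℕ → Bool}
    (hX : ∀ f : ℕ → ℕ, Computable f → ∃ p : ℕ → ℕ, Computable p ∧
      ∀ i, i ≤ p i ∧ X ∈ firstTrue (r (p i)) (f (p i))) :
    WeaklyDeep X := by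
  intro μ hμ
  have := hμ.1
  have hU := uniformlyClopen_firstTrue hr hmono
  obtain ⟨g, hg, hμg⟩ :=
    (hU.dyadicallyApproximable_measureReal hμ).exists_computable_le_of_tendsto_zero
      fun p => tendsto_measureReal_firstTrue μ (r p)
  obtain ⟨p, hp, hpX⟩ := hX (fun n => g (n, n)) (hg.comp (Computable.id.pair Computable.id))
  refine (hU.comp (hp.pair (hg.comp (hp.pair hp)))).not_mlRandom (fun i => ?_) fun i => (hpX i).2
  have hle : μ.real (firstTrue (r (p i)) (g (p i, p i))) ≤ (2 ^ i)⁻¹ :=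
    (hμg (p i) (p i)).trans
      (inv_anti₀ (by positivity) (pow_le_pow_right₀ one_le_two (hpX i).1))
  calc μ (firstTrue (r (p i)) (g (p i, p i)))
      = ENNReal.ofReal (μ.real (firstTrue (r (p i)) (g (p i, p i)))) :=
        (ofReal_measureReal (measure_ne_top μ _)).symm
    _ ≤ ENNReal.ofReal (2 ^ i)⁻¹ := ENNReal.ofReal_le_ofReal hle
    _ = 2 ^ (-(i : ℤ)) := by
        rw [ENNReal.ofReal_inv_of_pos (by positivity), ENNReal.ofReal_pow zero_le_two,
          ENNReal.ofReal_ofNat, ENNReal.zpow_neg, zpow_natCast]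

end FirstTrue

section DiagonalSet

/-- A c.e. set whose rows diagonalise over all computable functions: the row of index
`p = ⟨e, i⟩` holds those `j` for which the program `e` halts on input `⟨p, j⟩`. -/
def diagonalSet : Set ℕ := {n | (phi n.unpair.1.unpair.1 n).Dom}

theorem ceset_diagonalSet : CEset diagonalSet := by
  let f (x : ℕ × ℕ) : Bool :=
    (Code.evaln x.2 (Denumerable.ofNat Code x.1.unpair.1.unpair.1) x.1).isSome
  have hcode : Primrec fun x : ℕ × ℕ => Denumerable.ofNat Code x.1.unpair.1.unpair.1 :=
    (Primrec.ofNat Code).comp (Primrec.fst.comp (Primrec.unpair.comp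
      (Primrec.fst.comp (Primrec.unpair.comp Primrec.fst))))
  refine ⟨f, (Primrec.option_isSome.comp (Code.primrec_evaln.comp
    ((Primrec.snd.pair hcode).pair Primrec.fst))).to_comp, fun n => ?_⟩
  simp only [diagonalSet, phi, Set.mem_ofPred_eq, Part.dom_iff_mem, Code.evaln_complete, f,
    Option.isSome_iff_exists, Option.mem_def]
  exact exists_comm

theorem exists_pair_mem_diagonalSet_iff {f : ℕ → ℕ} (hf : Computable f) :
    ∃ e, ∀ i j, Nat.pair (Nat.pair e i) j ∈ diagonalSet ↔ j < f (Nat.pair e i) := by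
  have hlt : REPred fun n : ℕ => n.unpair.2 < f n.unpair.1 :=
    (Primrec.nat_lt.decide.to_comp.comp (Computable.snd.comp Computable.unpair)
      (hf.comp (Computable.fst.comp Computable.unpair))).computablePred.to_re
  obtain ⟨c, hc⟩ := Code.exists_code.1 (Partrec.nat_iff.1 (hlt.map (Computable.const 0).to₂))
  refine ⟨encode c, fun i j => ?_⟩
  simp only [diagonalSet, phi, Set.mem_ofPred_eq, Nat.unpair_pair, Denumerable.ofNat_encode, hc]
  simp [Part.assert]

end DiagonalSet

section PrunedTree

/-- The string `0ⁿ1`. -/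
def zerosOne (n : ℕ) : List Bool := List.replicate n false ++ [true]

theorem bits_three_mul_two_pow (n : ℕ) : (3 * 2 ^ n).bits = zerosOne n ++ [true] := by
  induction n with
  | zero => rfl
  | succ n ih =>
    rw [pow_succ, ← mul_assoc, mul_comm, Nat.bit0_bits _ (by positivity), ih]
    rfl

theorem natToStr_three_mul_two_pow_sub_one (n : ℕ) :
    natToStr (3 * 2 ^ n - 1) = zerosOne n := by
  have hpos : 0 < 3 * 2 ^ n := by positivity
  rw [natToStr, Nat.sub_add_cancel hpos, bits_three_mul_two_pow, List.dropLast_concat]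

/-- The full binary tree with the cones above `0ⁿ1` removed for all `n ∈ A`, which codes the
complement of `A` along the computable path `0^ω`. -/
def prunedTree (A : Set ℕ) : Set (List Bool) := {σ | ∀ n ∈ A, ¬ zerosOne n <+: σ}

variable {A : Set ℕ}

theorem isTree_prunedTree : IsTree (prunedTree A) :=
  fun _ _ hσ hτσ n hn hτ => hσ n hn (hτ.trans hτσ)

theorem zerosOne_prefix_zerosOne {m n : ℕ} : zerosOne m <+: zerosOne n ↔ m = n := by
  refine ⟨fun ⟨τ, hτ⟩ => ?_, fun h => h ▸ List.prefix_rfl⟩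
  have hidx (k : ℕ) (τ : List Bool) : (zerosOne k ++ τ).idxOf true = k := by
    simp [zerosOne, List.idxOf_append]
  calc m = (zerosOne m ++ τ).idxOf true := (hidx m τ).symm
    _ = n := by rw [hτ, ← List.append_nil (zerosOne n), hidx]

theorem zerosOne_mem_prunedTree {n : ℕ} : zerosOne n ∈ prunedTree A ↔ n ∉ A := by
  simp only [prunedTree, Set.mem_ofPred_eq, zerosOne_prefix_zerosOne]
  exact ⟨fun h hn => h n hn rfl, fun hn m hm hmn => hn (hmn ▸ hm)⟩

theorem charSeqStr_prunedTree {n : ℕ} :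
    charSeqStr (prunedTree A) (3 * 2 ^ n - 1) = true ↔ n ∉ A := by
  simp only [charSeqStr, natToStr_three_mul_two_pow_sub_one, decide_eq_true_eq,
    zerosOne_mem_prunedTree]

theorem false_mem_paths_prunedTree : (fun _ => false) ∈ paths (prunedTree A) := by
  intro k n _ hpre
  have : true ∈ seqTake (fun _ => false) k := hpre.subset (by simp [zerosOne])
  simp [seqTake] at this

theorem computable_zerosOne : Computable zerosOne :=
  (Computable.list_concat.comp (computable_seqTake (X := fun _ _ => false)
    (Computable.const false) Computable.id) (Computable.const true)).of_eq
    fun n => by simp [zerosOne, seqTake]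

theorem coCE_prunedTree (hA : CEset A) : CoCE (prunedTree A) := by
  obtain ⟨f, hf, hfA⟩ := hA
  let g (x : List Bool × ℕ) : Bool := f x.2.unpair &&
    decide (zerosOne x.2.unpair.1 = x.1.take (zerosOne x.2.unpair.1).length)
  have hz : Computable fun x : List Bool × ℕ => zerosOne x.2.unpair.1 :=
    computable_zerosOne.comp (Computable.fst.comp (Computable.unpair.comp Computable.snd))
  refine ⟨g, ?_, fun σ => ?_⟩
  · exact (Primrec.and.to_comp.comp (hf.comp (Computable.unpair.comp Computable.snd))
      (Primrec.eq.decide.to_comp.comp hz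
        (Primrec.list_take.to_comp.comp (Computable.list_length.comp hz) Computable.fst)) :)
  · simp only [prunedTree, Set.mem_compl_iff, Set.mem_ofPred_eq, not_forall, not_not, exists_prop,
      hfA, g, Bool.and_eq_true, decide_eq_true_eq, ← List.prefix_iff_eq_take]
    constructor
    · rintro ⟨n, ⟨t, ht⟩, hpre⟩
      exact ⟨Nat.pair n t, by rwa [Nat.unpair_pair], by rwa [Nat.unpair_pair]⟩
    · rintro ⟨s, hs, hpre⟩
      exact ⟨s.unpair.1, ⟨s.unpair.2, hs⟩, hpre⟩

end PrunedTree

section DiracMeasure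

theorem seqTake_length (X : ℕ → Bool) (n : ℕ) : (seqTake X n).length = n := by
  rw [seqTake, List.length_map, List.length_range]

theorem computableMeasure_dirac {X : ℕ → Bool} (hX : Computable X) :
    ComputableMeasure (Measure.dirac X) := by
  classical
  refine ⟨inferInstance, fun x => if x.1 = seqTake X x.1.length then 1 else 0, ?_, fun σ k => ?_⟩
  · have hinit : Computable fun x : List Bool × ℕ => seqTake X x.1.length :=
      computable_seqTake (X := fun _ => X) (hX.comp Computable.snd)
        (Computable.list_length.comp Computable.fst)
    exact (Computable.cond (Primrec.eq.decide.to_comp.comp Computable.fst hinit)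
      (Computable.const 1) (Computable.const 0)).of_eq fun x => by simp only [Bool.cond_decide]
  · have hmem : X ∈ cyl σ ↔ σ = seqTake X σ.length := Iff.rfl
    rw [Measure.dirac_apply, Set.indicator_apply, hmem]
    by_cases hσ : σ = seqTake X σ.length
    · simp only [if_pos hσ]
      simp
    · simp only [if_neg hσ]
      simp

theorem not_ttDeepClass_of_computable_mem {P : Set (ℕ → Bool)} {X : ℕ → Bool}
    (hX : Computable X) (hXP : X ∈ P) : ¬ TTDeepClass P := by
  intro h
  obtain ⟨g, ⟨-, -, hg⟩, hle⟩ := h _ (computableMeasure_dirac hX)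
  obtain ⟨n, hn⟩ := hg 1
  let σ : {σ : List Bool // σ ∈ canonTree P ∧ σ.length = n} :=
    ⟨seqTake X n, ⟨X, hXP, by rw [seqTake_length]⟩, seqTake_length X n⟩
  have hσ : Measure.dirac X (cyl σ.1) = 1 :=
    Measure.dirac_apply_of_mem (mem_cyl_seqTake.2 fun _ _ => rfl)
  have hone : (1 : ℝ≥0∞) ≤ 2 ^ (-(g n : ℤ)) :=
    hσ.symm.le.trans ((ENNReal.le_tsum σ).trans (hle n))
  rw [ENNReal.zpow_neg, zpow_natCast, ENNReal.one_le_inv] at hone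
  exact hone.not_gt (one_lt_pow₀ ENNReal.one_lt_two (Nat.one_le_iff_ne_zero.1 hn))

end DiracMeasure

theorem weaklyDeep_charSeqStr_prunedTree_diagonalSet :
    WeaklyDeep (charSeqStr (prunedTree diagonalSet)) := by
  have hr : Primrec₂ fun p v : ℕ => 3 * 2 ^ Nat.pair p v - 1 :=
    Primrec.nat_sub.comp (Primrec.nat_mul.comp (Primrec.const 3)
      (primrec_pow.comp (Primrec.const 2) Primrec₂.natPair)) (Primrec.const 1)
  have hmono (p : ℕ) : Monotone fun v : ℕ => 3 * 2 ^ Nat.pair p v - 1 := fun v w hvw => by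
    have hpair : Nat.pair p v ≤ Nat.pair p w :=
      StrictMono.monotone (fun _ _ => Nat.pair_lt_pair_right p) hvw
    exact Nat.sub_le_sub_right
      (Nat.mul_le_mul_left 3 (Nat.pow_le_pow_right two_pos hpair)) 1
  refine weaklyDeep_of_firstTrue_diagonal hr hmono fun f hf => ?_
  obtain ⟨e, he⟩ := exists_pair_mem_diagonalSet_iff hf
  refine ⟨Nat.pair e, (Primrec₂.natPair.comp (Primrec.const e) Primrec.id).to_comp,
    fun i => ⟨Nat.right_le_pair e i, mem_firstTrue.2 ⟨?_, fun j hj => ?_⟩⟩⟩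
  · rw [charSeqStr_prunedTree, he]
    exact lt_irrefl _
  · rw [← Bool.not_eq_true, charSeqStr_prunedTree, he, not_not]
    exact hj

/-- There is a co-c.e. tree `T` whose characteristic sequence is weakly deep,
but such that the Π⁰₁ class `[T]` is not tt-deep. -/
theorem statement6 :
    ∃ T : Set (List Bool), IsTree T ∧ CoCE T ∧
      WeaklyDeep (charSeqStr T) ∧ ¬ TTDeepClass (paths T) :=
  ⟨prunedTree diagonalSet, isTree_prunedTree, coCE_prunedTree ceset_diagonalSet,
    weaklyDeep_charSeqStr_prunedTree_diagonalSet,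
    not_ttDeepClass_of_computable_mem (Computable.const false) false_mem_paths_prunedTree⟩

end Depth
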